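/- arXiv:1209.0213 — 5 statements merged into one kernel-verified Lean document; each statement's English description precedes it below -/
import Mathlib

section
/- As a function of the tortoise coordinate, V₂ falls off like s⁻² at both ends: lim_{ρ→∞} V₂(ρ)·s(ρ)² = 1 and lim_{ρ→0⁺} V₂(ρ)·s(ρ)² = 1. -/
/-!
The Couch–Torrence inversion `ρ ↦ m² / ρ` exchanges the horizon `ρ = 0` with spatial infinity. It
fixes `V₂` and reverses the sign of `s`, so `V₂ s²` is invariant and the limit at infinity reduces
to the one at the horizon. There `V₂ s² = (ρ s / (ρ + m)²)²`, and `ρ s → -m²` because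
`ρ log (ρ / m) → 0`.
-/

open Filter Topology

/-- The tortoise radial coordinate `s(ρ) = ρ - m²/ρ + 2m·log(ρ/m)`. -/
noncomputable def tortoise (m ρ : ℝ) : ℝ := ρ - m ^ 2 / ρ + 2 * m * Real.log (ρ / m)

/-- The potential `V₂(ρ) = ρ²/(ρ+m)⁴`. -/
noncomputable def V2 (m ρ : ℝ) : ℝ := ρ ^ 2 / (ρ + m) ^ 4

section

variable {m : ℝ}

lemma tortoise_sq_div (hm : m ≠ 0) (ρ : ℝ) : tortoise m (m ^ 2 / ρ) = -tortoise m ρ := by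
  have h_inv : m ^ 2 / ρ / m = (ρ / m)⁻¹ := by field_simp
  rw [tortoise, tortoise, h_inv, Real.log_inv, div_div_cancel₀ (pow_ne_zero 2 hm)]
  ring

lemma V2_sq_div (hm : m ≠ 0) (ρ : ℝ) : V2 m (m ^ 2 / ρ) = V2 m ρ := by
  obtain rfl | hρ := eq_or_ne ρ 0
  · rw [div_zero]
  have h_add : m ^ 2 / ρ + m = m / ρ * (ρ + m) := by
    field_simp
    ring
  rw [V2, V2, h_add]
  field_simp

lemma tendsto_mul_log_div_zero (hm : m ≠ 0) :
    Tendsto (fun ρ : ℝ => ρ * Real.log (ρ / m)) (𝓝 0) (𝓝 0) := by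
  have h_cont : Continuous fun ρ : ℝ => m * (ρ / m * Real.log (ρ / m)) :=
    (Real.continuous_mul_log.comp (continuous_id.div_const m)).const_mul m
  simpa [← mul_assoc, mul_div_cancel₀ _ hm] using h_cont.tendsto 0

lemma tendsto_mul_tortoise_zero (hm : m ≠ 0) :
    Tendsto (fun ρ : ℝ => ρ * tortoise m ρ) (𝓝[≠] 0) (𝓝 (-m ^ 2)) := by
  have h_lim : Tendsto (fun ρ : ℝ => ρ ^ 2 - m ^ 2 + 2 * m * (ρ * Real.log (ρ / m)))
      (𝓝 0) (𝓝 (0 ^ 2 - m ^ 2 + 2 * m * 0)) :=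
    ((tendsto_id.pow 2).sub_const _).add ((tendsto_mul_log_div_zero hm).const_mul _)
  rw [show (0 : ℝ) ^ 2 - m ^ 2 + 2 * m * 0 = -m ^ 2 by ring] at h_lim
  refine (h_lim.mono_left nhdsWithin_le_nhds).congr' ?_
  filter_upwards [self_mem_nhdsWithin] with ρ (hρ : ρ ≠ 0)
  rw [tortoise]
  field_simp

lemma tendsto_V2_mul_tortoise_sq_zero (hm : m ≠ 0) :
    Tendsto (fun ρ : ℝ => V2 m ρ * tortoise m ρ ^ 2) (𝓝[≠] 0) (𝓝 1) := by
  have h_eq (ρ : ℝ) : V2 m ρ * tortoise m ρ ^ 2 = (ρ * tortoise m ρ / (ρ + m) ^ 2) ^ 2 := by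
    rw [V2, div_pow, ← pow_mul, mul_pow, div_mul_eq_mul_div]
  have h_den : Tendsto (fun ρ : ℝ => (ρ + m) ^ 2) (𝓝[≠] 0) (𝓝 (m ^ 2)) := by
    have h_cont : Continuous fun ρ : ℝ => (ρ + m) ^ 2 := by fun_prop
    simpa only [zero_add] using (h_cont.tendsto 0).mono_left nhdsWithin_le_nhds
  have h_one : (-m ^ 2 / m ^ 2) ^ 2 = 1 := by
    rw [neg_div, div_self (pow_ne_zero 2 hm), neg_one_sq]
  simpa only [h_eq, h_one, Pi.div_apply] using
    ((tendsto_mul_tortoise_zero hm).div h_den (pow_ne_zero 2 hm)).pow 2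

end

/-- As a function of the tortoise coordinate, `V₂` falls off like `s⁻²` at both ends:
`lim_{ρ→∞} V₂(ρ)·s(ρ)² = 1` and `lim_{ρ→0⁺} V₂(ρ)·s(ρ)² = 1`. -/
theorem V2_falloff (m : ℝ) (hm : 0 < m) :
    Tendsto (fun ρ : ℝ => V2 m ρ * tortoise m ρ ^ 2) atTop (𝓝 1) ∧
    Tendsto (fun ρ : ℝ => V2 m ρ * tortoise m ρ ^ 2) (𝓝[>] 0) (𝓝 1) := by
  have h_horizon : Tendsto (fun ρ : ℝ => V2 m ρ * tortoise m ρ ^ 2) (𝓝[>] 0) (𝓝 1) :=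
    (tendsto_V2_mul_tortoise_sq_zero hm.ne').mono_left (nhdsGT_le_nhdsNE 0)
  have h_inversion : Tendsto (fun ρ : ℝ => m ^ 2 / ρ) atTop (𝓝[>] 0) := by
    refine tendsto_nhdsWithin_iff.2 ⟨tendsto_const_nhds.div_atTop tendsto_id, ?_⟩
    filter_upwards [eventually_gt_atTop 0] with ρ hρ
    exact div_pos (pow_pos hm 2) hρ
  refine ⟨?_, h_horizon⟩
  simpa only [Function.comp_def, V2_sq_div hm.ne', tortoise_sq_div hm.ne', neg_sq] using
    h_horizon.comp h_inversion
end

section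
/- As a function of the tortoise coordinate, V₁ falls off like 2m·|s|⁻³ at both ends: lim_{ρ→∞} V₁(ρ)·|s(ρ)|³ = 2m and lim_{ρ→0⁺} V₁(ρ)·|s(ρ)|³ = 2m. -/
/-!
With the weight `w = ρ / (ρ + m)²` one has `V₁ |s|³ = 2m |w s|³` on the half-line, so it is
enough that `w s` tends to `-1` at `0` and to `1` at infinity. At `0`,
`ρ s = ρ² - m² + 2m ρ log (ρ/m)` extends continuously by `-m²`, because `x log x` is continuous.
The inversion `ρ ↦ m²/ρ` exchanges the two ends, fixes `w` and changes the sign of `s`.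
-/

open Filter Topology

/-- The potential `V₁(ρ) = 2mρ³/(ρ+m)⁶`. -/
noncomputable def V1 (m ρ : ℝ) : ℝ := 2 * m * ρ ^ 3 / (ρ + m) ^ 6

lemma V1_mul_abs_tortoise_pow_three (m : ℝ) {ρ : ℝ} (hρ : 0 ≤ ρ) :
    V1 m ρ * |tortoise m ρ| ^ 3 = 2 * m * |ρ / (ρ + m) ^ 2 * tortoise m ρ| ^ 3 := by
  have weight_nonneg : 0 ≤ ρ / (ρ + m) ^ 2 := by positivity
  rw [abs_mul, abs_of_nonneg weight_nonneg, mul_pow, div_pow, ← pow_mul, V1]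
  ring

lemma mul_tortoise (m : ℝ) {ρ : ℝ} (hρ : ρ ≠ 0) :
    ρ * tortoise m ρ = ρ ^ 2 - m ^ 2 + 2 * m * (ρ * Real.log (ρ / m)) := by
  unfold tortoise
  field_simp

lemma continuous_mul_log_div {m : ℝ} (hm : m ≠ 0) :
    Continuous fun ρ : ℝ => ρ * Real.log (ρ / m) := by
  have h : Continuous fun ρ : ℝ => m * (ρ / m * Real.log (ρ / m)) :=
    (Real.continuous_mul_log.comp (continuous_id.div_const m)).const_mul m
  simpa only [← mul_assoc, mul_div_cancel₀ _ hm] using h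

lemma tendsto_weight_mul_tortoise_zero {m : ℝ} (hm : m ≠ 0) :
    Tendsto (fun ρ : ℝ => ρ / (ρ + m) ^ 2 * tortoise m ρ) (𝓝[≠] 0) (𝓝 (-1)) := by
  let F : ℝ → ℝ := fun ρ =>
    (ρ ^ 2 - m ^ 2 + 2 * m * (ρ * Real.log (ρ / m))) / (ρ + m) ^ 2
  have F_continuousAt : ContinuousAt F 0 := by
    have numerator : Continuous fun ρ : ℝ =>
        ρ ^ 2 - m ^ 2 + 2 * m * (ρ * Real.log (ρ / m)) :=
      ((continuous_pow 2).sub continuous_const).add ((continuous_mul_log_div hm).const_mul _)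
    exact numerator.continuousAt.div (by fun_prop) (by simpa using hm)
  have F_zero : F 0 = -1 := by simp [F, hm]
  rw [← F_zero]
  refine (F_continuousAt.tendsto.mono_left nhdsWithin_le_nhds).congr' ?_
  filter_upwards [self_mem_nhdsWithin] with ρ hρ
  rw [div_mul_eq_mul_div, mul_tortoise m hρ]

lemma weight_inversion {m : ℝ} (hm : m ≠ 0) {ρ : ℝ} (hρ : ρ ≠ 0) :
    m ^ 2 / ρ / (m ^ 2 / ρ + m) ^ 2 = ρ / (ρ + m) ^ 2 := by
  have h : m ^ 2 / ρ + m = m / ρ * (ρ + m) := by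
    field_simp
    ring
  rw [h]
  field_simp

lemma tortoise_inversion {m : ℝ} (hm : m ≠ 0) (ρ : ℝ) :
    tortoise m (m ^ 2 / ρ) = -tortoise m ρ := by
  have h : m ^ 2 / ρ / m = (ρ / m)⁻¹ := by field_simp
  rw [tortoise, tortoise, h, Real.log_inv, div_div_cancel₀ (pow_ne_zero 2 hm)]
  ring

lemma tendsto_const_div_atTop_nhdsNE_zero {𝕜 : Type*} [Field 𝕜] [LinearOrder 𝕜]
    [IsStrictOrderedRing 𝕜] [TopologicalSpace 𝕜] [OrderTopology 𝕜] {c : 𝕜} (hc : c ≠ 0) :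
    Tendsto (fun x : 𝕜 => c / x) atTop (𝓝[≠] 0) := by
  refine tendsto_nhdsWithin_iff.2 ⟨tendsto_id.const_div_atTop c, ?_⟩
  filter_upwards [eventually_ne_atTop 0] with x hx
  exact div_ne_zero hc hx

lemma tendsto_weight_mul_tortoise_atTop {m : ℝ} (hm : m ≠ 0) :
    Tendsto (fun ρ : ℝ => ρ / (ρ + m) ^ 2 * tortoise m ρ) atTop (𝓝 1) := by
  have h := ((tendsto_weight_mul_tortoise_zero hm).comp
    (tendsto_const_div_atTop_nhdsNE_zero (pow_ne_zero 2 hm))).neg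
  rw [neg_neg] at h
  refine h.congr' ?_
  filter_upwards [eventually_ne_atTop 0] with ρ hρ
  rw [Function.comp_apply, weight_inversion hm hρ, tortoise_inversion hm, mul_neg, neg_neg]

lemma tendsto_V1_mul_abs_tortoise_pow_three {m a : ℝ} {l : Filter ℝ} (hl : ∀ᶠ ρ in l, 0 ≤ ρ)
    (h : Tendsto (fun ρ : ℝ => ρ / (ρ + m) ^ 2 * tortoise m ρ) l (𝓝 a)) :
    Tendsto (fun ρ : ℝ => V1 m ρ * |tortoise m ρ| ^ 3) l (𝓝 (2 * m * |a| ^ 3)) :=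
  ((h.abs.pow 3).const_mul (2 * m)).congr' <|
    hl.mono fun _ hρ => (V1_mul_abs_tortoise_pow_three m hρ).symm

/-- For `m < 0`, `Real.log (ρ / m)` is `log |ρ / m|`, so `s` is still a primitive of
`N² = (1 + m / ρ)²`. -/
theorem V1_falloff_general {m : ℝ} (hm : m ≠ 0) :
    Tendsto (fun ρ : ℝ => V1 m ρ * |tortoise m ρ| ^ 3) atTop (𝓝 (2 * m)) ∧
    Tendsto (fun ρ : ℝ => V1 m ρ * |tortoise m ρ| ^ 3) (𝓝[>] 0) (𝓝 (2 * m)) := by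
  constructor
  · simpa using tendsto_V1_mul_abs_tortoise_pow_three (eventually_ge_atTop 0)
      (tendsto_weight_mul_tortoise_atTop hm)
  · have h : Tendsto (fun ρ : ℝ => ρ / (ρ + m) ^ 2 * tortoise m ρ) (𝓝[>] 0) (𝓝 (-1)) :=
      (tendsto_weight_mul_tortoise_zero hm).mono_left (nhdsGT_le_nhdsNE 0)
    have nonneg : ∀ᶠ ρ : ℝ in 𝓝[>] 0, 0 ≤ ρ :=
      eventually_mem_nhdsWithin.mono fun _ hρ => (Set.mem_Ioi.1 hρ).le
    simpa using tendsto_V1_mul_abs_tortoise_pow_three nonneg h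

/-- As a function of the tortoise coordinate, `V₁` falls off like `2m·|s|⁻³` at both
ends: `lim_{ρ→∞} V₁(ρ)·|s(ρ)|³ = 2m` and `lim_{ρ→0⁺} V₁(ρ)·|s(ρ)|³ = 2m`. -/
theorem V1_falloff (m : ℝ) (hm : 0 < m) :
    Tendsto (fun ρ : ℝ => V1 m ρ * |tortoise m ρ| ^ 3) atTop (𝓝 (2 * m)) ∧
    Tendsto (fun ρ : ℝ => V1 m ρ * |tortoise m ρ| ^ 3) (𝓝[>] 0) (𝓝 (2 * m)) :=
  V1_falloff_general hm.ne'
end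

section
/- Let ℓ ∈ ℕ and let P : (0,∞) → ℝ be twice differentiable. Then for every ρ > 0, −N(ρ)⁻² · d/dρ[ N(ρ)⁻² · d/dρ( N(ρ)·P(ρ) ) ] + (V₁(ρ) + ℓ(ℓ+1)·V₂(ρ)) · N(ρ)·P(ρ) = −N(ρ)⁻³ · ( P''(ρ) − ℓ(ℓ+1)·P(ρ)/ρ² ). That is, on the ℓ-th spherical-harmonic mode, the operator 𝒜 = −∂ₛ² + V₁ − V₂Δ applied to p = N·P equals −N⁻³ times the flat radial operator ∂²_ρ − ℓ(ℓ+1)/ρ² applied to P. -/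
/-- The lapse-type factor `N(ρ) = 1 + m/ρ`. -/
noncomputable def Nlapse (m ρ : ℝ) : ℝ := 1 + m / ρ

/-!
Since `(N⁻¹)' = -N⁻² N'`, the `s`-derivative `N⁻² (N P)'` is the Wronskian `N⁻¹ P' - (N⁻¹)' P`. In
the derivative of a Wronskian the first-order terms cancel, which leaves `N⁻¹ P'' - (N⁻¹)'' P`. The
potentials are exactly `V₁ = -N⁻³ (N⁻¹)''`, which absorbs the zeroth-order term, and
`V₂ = N⁻⁴ / ρ²`, which turns the angular term into that of the flat operator.
-/

open scoped Topology

section Wronskian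

variable {𝕜 : Type*} [NontriviallyNormedField 𝕜] {f g N P : 𝕜 → 𝕜} {x : 𝕜}

/-- The Wronskian `f g' - f' g` of two functions of one variable. With `f = N⁻¹` it is the
derivative of `N g` with respect to a coordinate `s` satisfying `ds/dx = N²`. -/
noncomputable def wronskian (f g : 𝕜 → 𝕜) (x : 𝕜) : 𝕜 :=
  f x * deriv g x - deriv f x * g x

theorem inv_sq_mul_deriv_mul_eq_wronskian (hN : DifferentiableAt 𝕜 N x) (hN0 : N x ≠ 0)
    (hP : DifferentiableAt 𝕜 P x) :
    (N x ^ 2)⁻¹ * deriv (fun y => N y * P y) x = wronskian N⁻¹ P x := by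
  rw [wronskian, deriv_fun_mul hN hP, (hN.hasDerivAt.inv hN0).deriv, Pi.inv_apply]
  field_simp
  ring

theorem hasDerivAt_wronskian (hf : DifferentiableAt 𝕜 f x) (hf' : DifferentiableAt 𝕜 (deriv f) x)
    (hg : DifferentiableAt 𝕜 g x) (hg' : DifferentiableAt 𝕜 (deriv g) x) :
    HasDerivAt (wronskian f g) (f x * deriv (deriv g) x - deriv (deriv f) x * g x) x := by
  refine ((hf.hasDerivAt.fun_mul hg'.hasDerivAt).fun_sub
    (hf'.hasDerivAt.fun_mul hg.hasDerivAt)).congr_deriv ?_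
  ring

theorem deriv_inv_sq_mul_deriv_mul (hN : ∀ᶠ y in 𝓝 x, DifferentiableAt 𝕜 N y) (hN0 : N x ≠ 0)
    (hN' : DifferentiableAt 𝕜 (deriv N⁻¹) x) (hP : ∀ᶠ y in 𝓝 x, DifferentiableAt 𝕜 P y)
    (hP' : DifferentiableAt 𝕜 (deriv P) x) :
    deriv (fun y => (N y ^ 2)⁻¹ * deriv (fun z => N z * P z) y) x =
      (N x)⁻¹ * deriv (deriv P) x - deriv (deriv N⁻¹) x * P x := by
  have hNx : DifferentiableAt 𝕜 N x := hN.self_of_nhds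
  have eq_wronskian :
      (fun y => (N y ^ 2)⁻¹ * deriv (fun z => N z * P z) y) =ᶠ[𝓝 x] wronskian N⁻¹ P := by
    filter_upwards [hN, hNx.continuousAt.eventually_ne hN0, hP] with y hNy hNy0 hPy
    exact inv_sq_mul_deriv_mul_eq_wronskian hNy hNy0 hPy
  rw [eq_wronskian.deriv_eq]
  exact (hasDerivAt_wronskian (hNx.inv hN0) hN' hP.self_of_nhds hP').deriv

end Wronskian

section Lapse

variable {m ρ : ℝ}

theorem Nlapse_eq_div (hρ : ρ ≠ 0) : Nlapse m ρ = (ρ + m) / ρ := by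
  rw [Nlapse, add_div, div_self hρ]

theorem Nlapse_ne_zero (hρ : ρ ≠ 0) (hρm : ρ + m ≠ 0) : Nlapse m ρ ≠ 0 := by
  rw [Nlapse_eq_div hρ]
  exact div_ne_zero hρm hρ

theorem hasDerivAt_Nlapse (hρ : ρ ≠ 0) : HasDerivAt (Nlapse m) (-m / ρ ^ 2) ρ := by
  refine (((hasDerivAt_inv hρ).const_mul m).const_add 1).congr_deriv ?_
  ring

theorem hasDerivAt_inv_Nlapse (hρ : ρ ≠ 0) (hρm : ρ + m ≠ 0) :
    HasDerivAt (Nlapse m)⁻¹ (m / (ρ + m) ^ 2) ρ := by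
  refine ((hasDerivAt_Nlapse hρ).inv (Nlapse_ne_zero hρ hρm)).congr_deriv ?_
  rw [Nlapse_eq_div hρ]
  field_simp

theorem hasDerivAt_deriv_inv_Nlapse (hρ : ρ ≠ 0) (hρm : ρ + m ≠ 0) :
    HasDerivAt (deriv (Nlapse m)⁻¹) (-2 * m / (ρ + m) ^ 3) ρ := by
  have hadd : HasDerivAt (fun x : ℝ => x + m) 1 ρ := (hasDerivAt_id' ρ).add_const m
  have deriv_eq : deriv (Nlapse m)⁻¹ =ᶠ[𝓝 ρ] fun x => m / (x + m) ^ 2 := by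
    filter_upwards [eventually_ne_nhds hρ, hadd.continuousAt.eventually_ne hρm] with x hx hxm
    exact (hasDerivAt_inv_Nlapse hx hxm).deriv
  refine (((hasDerivAt_const ρ m).fun_div (hadd.fun_pow 2)
    (pow_ne_zero 2 hρm)).congr_of_eventuallyEq deriv_eq).congr_deriv ?_
  field_simp
  ring

theorem V1_eq_neg_inv_Nlapse_pow_mul (hρ : ρ ≠ 0) (hρm : ρ + m ≠ 0) :
    V1 m ρ = -(Nlapse m ρ ^ 3)⁻¹ * deriv (deriv (Nlapse m)⁻¹) ρ := by
  rw [(hasDerivAt_deriv_inv_Nlapse hρ hρm).deriv, V1, Nlapse_eq_div hρ]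
  field_simp

theorem V2_eq_inv_Nlapse_pow_div (hρ : ρ ≠ 0) :
    V2 m ρ = (Nlapse m ρ ^ 4)⁻¹ / ρ ^ 2 := by
  rw [V2, Nlapse_eq_div hρ]
  field_simp

end Lapse

theorem mode_operator_identity_general {m c ρ : ℝ} {P : ℝ → ℝ} (hρ : ρ ≠ 0) (hρm : ρ + m ≠ 0)
    (hP : ∀ᶠ x in 𝓝 ρ, DifferentiableAt ℝ P x) (hP' : DifferentiableAt ℝ (deriv P) ρ) :
    -(Nlapse m ρ ^ 2)⁻¹ *
        deriv (fun x => (Nlapse m x ^ 2)⁻¹ * deriv (fun y => Nlapse m y * P y) x) ρ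
      + (V1 m ρ + c * V2 m ρ) * (Nlapse m ρ * P ρ)
    = -(Nlapse m ρ ^ 3)⁻¹ * (deriv (deriv P) ρ - c * P ρ / ρ ^ 2) := by
  have hN : ∀ᶠ x in 𝓝 ρ, DifferentiableAt ℝ (Nlapse m) x :=
    (eventually_ne_nhds hρ).mono fun _ hx => (hasDerivAt_Nlapse hx).differentiableAt
  have hN0 : Nlapse m ρ ≠ 0 := Nlapse_ne_zero hρ hρm
  rw [deriv_inv_sq_mul_deriv_mul hN hN0
      (hasDerivAt_deriv_inv_Nlapse hρ hρm).differentiableAt hP hP',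
    V1_eq_neg_inv_Nlapse_pow_mul hρ hρm, V2_eq_inv_Nlapse_pow_div hρ]
  field_simp
  ring

/-- On the `ℓ`-th spherical-harmonic mode, the operator `𝒜 = -∂ₛ² + V₁ - V₂Δ`
applied to `p = N·P` equals `-N⁻³` times the flat radial operator
`∂²_ρ - ℓ(ℓ+1)/ρ²` applied to `P`: for every twice differentiable
`P : (0,∞) → ℝ` and every `ρ > 0`,
`-N⁻²·d/dρ[N⁻²·d/dρ(N·P)] + (V₁ + ℓ(ℓ+1)V₂)·N·P = -N⁻³·(P'' - ℓ(ℓ+1)P/ρ²)`.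
(Since `ds/dρ = N²`, the `s`-derivative equals `N⁻²` times the `ρ`-derivative.) -/
theorem mode_operator_identity (m : ℝ) (hm : 0 < m) (ℓ : ℕ) (P : ℝ → ℝ)
    (hP1 : ∀ ρ : ℝ, 0 < ρ → DifferentiableAt ℝ P ρ)
    (hP2 : ∀ ρ : ℝ, 0 < ρ → DifferentiableAt ℝ (deriv P) ρ) :
    ∀ ρ : ℝ, 0 < ρ →
      -(Nlapse m ρ ^ 2)⁻¹ *
          deriv (fun x => (Nlapse m x ^ 2)⁻¹ * deriv (fun y => Nlapse m y * P y) x) ρ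
        + (V1 m ρ + (ℓ : ℝ) * ((ℓ : ℝ) + 1) * V2 m ρ) * (Nlapse m ρ * P ρ)
      = -(Nlapse m ρ ^ 3)⁻¹ *
          (deriv (deriv P) ρ - (ℓ : ℝ) * ((ℓ : ℝ) + 1) * P ρ / ρ ^ 2) :=
  fun ρ hρ => mode_operator_identity_general hρ.ne' (add_pos hρ hm).ne'
    ((lt_mem_nhds hρ).mono hP1) (hP2 ρ hρ)
end

section
/- Let ℓ ∈ ℕ and let F : ℝ × ℝ → ℝ be a smooth solution of the ℓ-mode wave equation ∂²F/∂t² = ∂²F/∂x² − W_ℓ(x)·F for which there exists R > 0 such that F(t,x) = 0 whenever |x| ≥ R + |t|. Then there exists a smooth function F̃ : ℝ × ℝ → ℝ (a time integral of F) such that ∂F̃/∂t = F, F̃ satisfies the same equation ∂²F̃/∂t² = ∂²F̃/∂x² − W_ℓ(x)·F̃, and the energy ∫_ℝ [ (∂F̃/∂t)² + (∂F̃/∂x)² + W_ℓ(x)·F̃² ] dx is finite and independent of t. -/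
open MeasureTheory

/-!
A time integral of `F` must have the form `F̃(t, x) = u(x) + ∫₀ᵗ F(τ, x) dτ`. Integrating the wave
equation for `F` in time shows that `F̃` solves it too as soon as `u'' = W u + ∂F/∂t(0, ·)`, so
everything rests on solving this static equation, whose source has compact support, with finite
static energy `∫ (u'² + W u²)`.

In the isotropic radius `ρ`, static waves on the extreme Reissner–Nordström exterior are harmonic
functions of flat space multiplied by `ρ + m`. Hence `(ρ + m) ρ ^ ℓ` and `(ρ + m) ρ ^ (-ℓ - 1)`
solve the homogeneous static equation, and variation of constants gives a `u` which is a multiple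
of the first near the horizon and of the second near infinity. Integrating
`(u u')' = u'² + W u² + u g`, with `g` the source, the boundary terms at both ends have the
favourable sign, so the static energy is at most `-∫ u g`.

Conservation: the energy densities at times `t` and `0` differ by the spatial derivative of the
time-integrated energy flux, which has compact support because `∂F̃/∂t = F` has.
-/

open Set Filter Topology
open scoped ContDiff

/-! ### Partial derivatives and primitives in time -/

section Spacetime

variable {E : Type*} [NormedAddCommGroup E] [NormedSpace ℝ E] {F : ℝ → ℝ → E}

/-- The partial derivative in time of a function of `(t, x)`. -/
noncomputable def timeDeriv (F : ℝ → ℝ → E) (t x : ℝ) : E := deriv (fun τ => F τ x) t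

/-- The partial derivative in space of a function of `(t, x)`. -/
noncomputable def spaceDeriv (F : ℝ → ℝ → E) (t x : ℝ) : E := deriv (F t) x

/-- The primitive in time of a function of `(t, x)`, normalised to vanish at `t = 0`. -/
noncomputable def timePrimitive (F : ℝ → ℝ → E) (t x : ℝ) : E := ∫ τ in (0 : ℝ)..t, F τ x

lemma hasDerivAt_time (hF : Differentiable ℝ (Function.uncurry F)) (t x : ℝ) :
    HasDerivAt (fun τ => F τ x) (timeDeriv F t x) t :=
  (hF.comp (differentiable_id.prodMk (differentiable_const x)) t).hasDerivAt

lemma hasDerivAt_space (hF : Differentiable ℝ (Function.uncurry F)) (t x : ℝ) :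
    HasDerivAt (F t) (spaceDeriv F t x) x :=
  (hF.comp ((differentiable_const t).prodMk differentiable_id) x).hasDerivAt

lemma uncurry_timeDeriv_eq_fderiv (hF : Differentiable ℝ (Function.uncurry F)) :
    Function.uncurry (timeDeriv F) = fun p => fderiv ℝ (Function.uncurry F) p (1, 0) := by
  ext ⟨t, x⟩
  exact ((hF (t, x)).hasFDerivAt.comp_hasDerivAt t
    ((hasDerivAt_id t).prodMk (hasDerivAt_const t x))).deriv

lemma uncurry_spaceDeriv_eq_fderiv (hF : Differentiable ℝ (Function.uncurry F)) :
    Function.uncurry (spaceDeriv F) = fun p => fderiv ℝ (Function.uncurry F) p (0, 1) := by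
  ext ⟨t, x⟩
  exact ((hF (t, x)).hasFDerivAt.comp_hasDerivAt x
    ((hasDerivAt_const x t).prodMk (hasDerivAt_id x))).deriv

lemma contDiff_timeDeriv {m n : ℕ∞ω} (hF : ContDiff ℝ n (Function.uncurry F)) (hmn : m + 1 ≤ n) :
    ContDiff ℝ m (Function.uncurry (timeDeriv F)) := by
  rw [uncurry_timeDeriv_eq_fderiv ((hF.of_le hmn).differentiable (by simp))]
  exact (hF.fderiv_right hmn).clm_apply contDiff_const

lemma contDiff_spaceDeriv {m n : ℕ∞ω} (hF : ContDiff ℝ n (Function.uncurry F)) (hmn : m + 1 ≤ n) :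
    ContDiff ℝ m (Function.uncurry (spaceDeriv F)) := by
  rw [uncurry_spaceDeriv_eq_fderiv ((hF.of_le hmn).differentiable (by simp))]
  exact (hF.fderiv_right hmn).clm_apply contDiff_const

lemma timeDeriv_spaceDeriv_comm (hF : ContDiff ℝ 2 (Function.uncurry F)) :
    timeDeriv (spaceDeriv F) = spaceDeriv (timeDeriv F) := by
  have hF₁ : Differentiable ℝ (Function.uncurry F) := hF.differentiable (by simp)
  have hF₂ : Differentiable ℝ (fderiv ℝ (Function.uncurry F)) :=
    (hF.fderiv_right (m := 1) (by norm_num)).differentiable (by simp)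
  have hsymm (p : ℝ × ℝ) : IsSymmSndFDerivAt ℝ (Function.uncurry F) p :=
    hF.contDiffAt.isSymmSndFDerivAt (by simp)
  apply Function.uncurry_injective
  rw [uncurry_timeDeriv_eq_fderiv
      ((contDiff_spaceDeriv hF (m := 1) (by norm_num)).differentiable (by simp)),
    uncurry_spaceDeriv_eq_fderiv
      ((contDiff_timeDeriv hF (m := 1) (by norm_num)).differentiable (by simp)),
    uncurry_timeDeriv_eq_fderiv hF₁, uncurry_spaceDeriv_eq_fderiv hF₁]
  ext p
  simp only [fderiv_clm_apply (hF₂ p) (differentiableAt_const _), fderiv_fun_const]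
  simpa using (hsymm p).eq (1, 0) (0, 1)

lemma contDiff_succ_of_hasDerivAt {n : ℕ} {f f₁ f₂ : ℝ → ℝ → E}
    (h₁ : ∀ t x, HasDerivAt (fun τ => f τ x) (f₁ t x) t) (h₂ : ∀ t x, HasDerivAt (f t) (f₂ t x) x)
    (hf₁ : ContDiff ℝ n (Function.uncurry f₁)) (hf₂ : ContDiff ℝ n (Function.uncurry f₂)) :
    ContDiff ℝ (n + 1) (Function.uncurry f) := by
  let smul : E →L[ℝ] ℝ →L[ℝ] E := ContinuousLinearMap.smulRightL ℝ ℝ E 1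
  have hs₁ : ContDiff ℝ n (Function.uncurry fun t x => smul (f₁ t x)) := smul.contDiff.comp hf₁
  have hs₂ : ContDiff ℝ n (Function.uncurry fun t x => smul (f₂ t x)) := smul.contDiff.comp hf₂
  refine contDiff_succ_iff_hasFDerivAt.2
    ⟨fun p => (smul (f₁ p.1 p.2)).coprod (smul (f₂ p.1 p.2)), ?_, fun p => ?_⟩
  · exact (ContinuousLinearMap.coprodEquivL (𝕜 := ℝ) (E := ℝ) (F := ℝ) (G := E) ℝ).contDiff.comp
      (hs₁.prodMk hs₂)
  · exact (hasStrictFDerivAt_uncurry_coprod (f := f)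
      (f₁ := fun t x => smul (f₁ t x)) (f₂ := fun t x => smul (f₂ t x))
      (Eventually.of_forall fun q => (h₁ q.1 q.2).hasFDerivAt)
      (Eventually.of_forall fun q => (h₂ q.1 q.2).hasFDerivAt)
      hs₁.continuous.continuousAt hs₂.continuous.continuousAt).hasFDerivAt

lemma continuous_timePrimitive (hF : Continuous (Function.uncurry F)) :
    Continuous (Function.uncurry (timePrimitive F)) := by
  have h : Continuous (Function.uncurry fun (p : ℝ × ℝ) (τ : ℝ) => F τ p.2) :=
    hF.comp (continuous_snd.prodMk (continuous_snd.comp continuous_fst))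
  exact intervalIntegral.continuous_parametric_intervalIntegral_of_continuous
    (a₀ := 0) h continuous_fst

lemma hasDerivAt_timePrimitive_space (hF : ContDiff ℝ 1 (Function.uncurry F)) (t x : ℝ) :
    HasDerivAt (timePrimitive F t) (timePrimitive (spaceDeriv F) t x) x := by
  have hF' : Continuous (Function.uncurry (spaceDeriv F)) :=
    (contDiff_spaceDeriv (m := 0) hF (by simp)).continuous
  obtain ⟨C, hC⟩ := (isCompact_uIcc.prod (isCompact_closedBall x 1)).exists_bound_of_continuousOn
    (s := uIcc 0 t ×ˢ Metric.closedBall x 1) hF'.continuousOn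
  refine (intervalIntegral.hasDerivAt_integral_of_dominated_loc_of_deriv_le
    (F := fun y τ => F τ y) (F' := fun y τ => spaceDeriv F τ y) (bound := fun _ => C)
    (Metric.closedBall_mem_nhds x one_pos) (Eventually.of_forall fun y => ?_) ?_ ?_
    (Eventually.of_forall fun τ hτ y hy => ?_) intervalIntegrable_const
    (Eventually.of_forall fun τ _ y _ => hasDerivAt_space (hF.differentiable (by simp)) τ y)).2
  · exact (hF.continuous.comp (Continuous.prodMk_left y)).aestronglyMeasurable
  · exact (hF.continuous.comp (Continuous.prodMk_left x)).intervalIntegrable _ _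
  · exact (hF'.comp (Continuous.prodMk_left x)).aestronglyMeasurable
  · exact hC (τ, y) ⟨uIoc_subset_uIcc hτ, hy⟩

variable [CompleteSpace E]

lemma hasDerivAt_timePrimitive_time (hF : Continuous (Function.uncurry F)) (t x : ℝ) :
    HasDerivAt (fun τ => timePrimitive F τ x) (F t x) t :=
  ((hF.comp (Continuous.prodMk_left x)).integral_hasStrictDerivAt 0 t).hasDerivAt

lemma timePrimitive_eq_sub_of_hasDerivAt {f : ℝ → E} {x : ℝ}
    (hf : ∀ t, HasDerivAt f (F t x) t) (hF : Continuous (Function.uncurry F)) (t : ℝ) :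
    timePrimitive F t x = f t - f 0 :=
  intervalIntegral.integral_eq_sub_of_hasDerivAt (fun τ _ => hf τ)
    ((hF.comp (Continuous.prodMk_left x)).intervalIntegrable 0 t)

lemma contDiff_timePrimitive {n : ℕ∞} (hF : ContDiff ℝ n (Function.uncurry F)) :
    ContDiff ℝ n (Function.uncurry (timePrimitive F)) := by
  refine contDiff_iff_forall_nat_le.2 fun k hk => ?_
  replace hF : ContDiff ℝ k (Function.uncurry F) := hF.of_le (mod_cast hk)
  clear hk
  induction k generalizing F with
  | zero => exact contDiff_zero.2 (continuous_timePrimitive hF.continuous)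
  | succ k ih =>
    push_cast at hF ⊢
    exact contDiff_succ_of_hasDerivAt (hasDerivAt_timePrimitive_time hF.continuous)
      (hasDerivAt_timePrimitive_space (hF.of_le (by simp))) hF.of_succ
      (ih (contDiff_spaceDeriv hF le_rfl))

end Spacetime

/-! ### Spatially compact support -/

/-- A function of `(t, x)` has spatially compact support if over every bounded time interval it is
supported in a fixed compact set of positions. -/
def HasSpatiallyCompactSupport {E : Type*} [Zero E] (F : ℝ → ℝ → E) : Prop :=
  ∀ T : ℝ, ∃ K : Set ℝ, IsCompact K ∧ ∀ t x, |t| ≤ T → x ∉ K → F t x = 0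

namespace HasSpatiallyCompactSupport

section Zero

variable {E : Type*} [Zero E] {F : ℝ → ℝ → E}

lemma of_lightCone {R : ℝ} (hF : ∀ t x, R + |t| ≤ |x| → F t x = 0) :
    HasSpatiallyCompactSupport F := by
  refine fun T => ⟨Icc (-(R + T)) (R + T), isCompact_Icc, fun t x ht hx => hF t x ?_⟩
  rw [mem_Icc, ← abs_le, not_le] at hx
  linarith

lemma hasCompactSupport (hF : HasSpatiallyCompactSupport F) (t : ℝ) : HasCompactSupport (F t) := by
  obtain ⟨K, hK, hFK⟩ := hF |t|
  exact HasCompactSupport.intro hK fun x hx => hFK t x le_rfl hx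

end Zero

variable {E : Type*} [NormedAddCommGroup E] [NormedSpace ℝ E] {F : ℝ → ℝ → E}

protected lemma timeDeriv (hF : HasSpatiallyCompactSupport F) :
    HasSpatiallyCompactSupport (timeDeriv F) := by
  intro T
  obtain ⟨K, hK, hFK⟩ := hF (T + 1)
  refine ⟨K, hK, fun t x ht hx => ?_⟩
  have hzero : (fun τ => F τ x) =ᶠ[𝓝 t] fun _ => 0 := by
    filter_upwards [continuous_abs.continuousAt.eventually_lt continuousAt_const
      (show |t| < T + 1 by linarith)] with τ hτ
    exact hFK τ x hτ.le hx
  rw [timeDeriv, hzero.deriv_eq, deriv_const]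

protected lemma timePrimitive (hF : HasSpatiallyCompactSupport F) :
    HasSpatiallyCompactSupport (timePrimitive F) := by
  intro T
  obtain ⟨K, hK, hFK⟩ := hF T
  refine ⟨K, hK, fun t x ht hx => ?_⟩
  refine (intervalIntegral.integral_congr fun τ hτ => ?_).trans intervalIntegral.integral_zero
  have hτt : |τ| ≤ |t| := by simpa using abs_sub_left_of_mem_uIcc hτ
  exact hFK τ x (hτt.trans ht) hx

end HasSpatiallyCompactSupport

section SpatialDivergence

variable {E : Type*} [NormedAddCommGroup E] [NormedSpace ℝ E] {H : ℝ → ℝ → E}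

lemma integrable_timePrimitive_spaceDeriv (hH : ContDiff ℝ 1 (Function.uncurry H))
    (hsupp : HasSpatiallyCompactSupport H) (t : ℝ) :
    Integrable (timePrimitive (spaceDeriv H) t) := by
  have hderiv : deriv (timePrimitive H t) = timePrimitive (spaceDeriv H) t :=
    funext fun x => (hasDerivAt_timePrimitive_space hH t x).deriv
  have hcont : Continuous (timePrimitive (spaceDeriv H) t) :=
    (continuous_timePrimitive (contDiff_spaceDeriv (m := 0) hH (by simp)).continuous).comp
      (Continuous.prodMk_right t)
  exact hcont.integrable_of_hasCompactSupport
    (hderiv ▸ (hsupp.timePrimitive.hasCompactSupport t).deriv)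

lemma integral_timePrimitive_spaceDeriv [CompleteSpace E] (hH : ContDiff ℝ 1 (Function.uncurry H))
    (hsupp : HasSpatiallyCompactSupport H) (t : ℝ) :
    ∫ x, timePrimitive (spaceDeriv H) t x = 0 := by
  have hcont : Continuous (timePrimitive H t) :=
    (continuous_timePrimitive hH.continuous).comp (Continuous.prodMk_right t)
  exact integral_eq_zero_of_hasDerivAt_of_integrable (hasDerivAt_timePrimitive_space hH t)
    (integrable_timePrimitive_spaceDeriv hH hsupp t)
    (hcont.integrable_of_hasCompactSupport (hsupp.timePrimitive.hasCompactSupport t))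

end SpatialDivergence

/-! ### Waves and their energy -/

/-- `F` is a smooth solution of the wave equation `∂²F/∂t² = ∂²F/∂x² - W F` on the line. -/
structure IsWave (W : ℝ → ℝ) (F : ℝ → ℝ → ℝ) : Prop where
  contDiff : ContDiff ℝ ∞ (Function.uncurry F)
  eq : ∀ t x, timeDeriv (timeDeriv F) t x = spaceDeriv (spaceDeriv F) t x - W x * F t x

/-- The energy density of a wave with potential `W`, without the customary factor `1 / 2`. -/
noncomputable def energyDensity (W : ℝ → ℝ) (F : ℝ → ℝ → ℝ) (t x : ℝ) : ℝ :=
  timeDeriv F t x ^ 2 + spaceDeriv F t x ^ 2 + W x * F t x ^ 2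

/-- The energy flux, signed so that the time derivative of the energy density is its spatial
derivative. -/
noncomputable def energyFlux (F : ℝ → ℝ → ℝ) (t x : ℝ) : ℝ :=
  2 * (timeDeriv F t x * spaceDeriv F t x)

namespace IsWave

variable {W : ℝ → ℝ} {F : ℝ → ℝ → ℝ}

protected lemma contDiff_timeDeriv (hF : IsWave W F) :
    ContDiff ℝ ∞ (Function.uncurry (timeDeriv F)) :=
  contDiff_timeDeriv hF.contDiff le_rfl

protected lemma contDiff_spaceDeriv (hF : IsWave W F) :
    ContDiff ℝ ∞ (Function.uncurry (spaceDeriv F)) :=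
  contDiff_spaceDeriv hF.contDiff le_rfl

lemma contDiff_energyFlux (hF : IsWave W F) : ContDiff ℝ ∞ (Function.uncurry (energyFlux F)) :=
  contDiff_const.mul (hF.contDiff_timeDeriv.mul hF.contDiff_spaceDeriv)

lemma hasDerivAt_energyDensity (hF : IsWave W F) (t x : ℝ) :
    HasDerivAt (fun τ => energyDensity W F τ x) (spaceDeriv (energyFlux F) t x) t := by
  have hFt : Differentiable ℝ (Function.uncurry (timeDeriv F)) :=
    hF.contDiff_timeDeriv.differentiable (by simp)
  have hFx : Differentiable ℝ (Function.uncurry (spaceDeriv F)) :=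
    hF.contDiff_spaceDeriv.differentiable (by simp)
  have hflux : spaceDeriv (energyFlux F) t x = 2 * (spaceDeriv (timeDeriv F) t x * spaceDeriv F t x
      + timeDeriv F t x * spaceDeriv (spaceDeriv F) t x) :=
    (((hasDerivAt_space hFt t x).mul (hasDerivAt_space hFx t x)).const_mul 2).deriv
  refine ((((hasDerivAt_time hFt t x).fun_pow 2).add ((hasDerivAt_time hFx t x).fun_pow 2)).add
    (((hasDerivAt_time (hF.contDiff.differentiable (by simp)) t x).fun_pow 2).const_mul
      (W x))).congr_deriv ?_
  rw [hflux, hF.eq, timeDeriv_spaceDeriv_comm (contDiff_infty.1 hF.contDiff 2)]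
  push_cast
  ring

lemma energyDensity_eq_add_timePrimitive (hF : IsWave W F) (t : ℝ) :
    energyDensity W F t =
      fun x => energyDensity W F 0 x + timePrimitive (spaceDeriv (energyFlux F)) t x := by
  ext x
  rw [timePrimitive_eq_sub_of_hasDerivAt (fun τ => hF.hasDerivAt_energyDensity τ x)
    (contDiff_spaceDeriv (m := ∞) hF.contDiff_energyFlux le_rfl).continuous, add_sub_cancel]

theorem integrable_energyDensity_and_integral_eq (hF : IsWave W F)
    (hsupp : HasSpatiallyCompactSupport (timeDeriv F)) (h₀ : Integrable (energyDensity W F 0))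
    (t : ℝ) : Integrable (energyDensity W F t) ∧
      ∫ x, energyDensity W F t x = ∫ x, energyDensity W F 0 x := by
  have hflux : ContDiff ℝ 1 (Function.uncurry (energyFlux F)) :=
    hF.contDiff_energyFlux.of_le (mod_cast le_top)
  have hfluxSupp : HasSpatiallyCompactSupport (energyFlux F) := fun T => by
    obtain ⟨K, hK, hFK⟩ := hsupp T
    exact ⟨K, hK, fun t x ht hx => by simp [energyFlux, hFK t x ht hx]⟩
  have hdiv := integrable_timePrimitive_spaceDeriv hflux hfluxSupp t
  rw [hF.energyDensity_eq_add_timePrimitive t]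
  exact ⟨h₀.add hdiv, by
    rw [integral_add h₀ hdiv, integral_timePrimitive_spaceDeriv hflux hfluxSupp, add_zero]⟩

end IsWave

/-! ### Static solutions -/

/-- `u` is a smooth solution of the static equation `u'' = W u + g` with potential `W` and
source `g`. -/
structure IsStaticSol (W g u : ℝ → ℝ) : Prop where
  contDiff : ContDiff ℝ ∞ u
  eq : ∀ x, deriv (deriv u) x = W x * u x + g x

/-- The energy density of a time-independent function, without the customary factor `1 / 2`. -/
noncomputable def staticEnergyDensity (W u : ℝ → ℝ) (x : ℝ) : ℝ := deriv u x ^ 2 + W x * u x ^ 2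

namespace IsStaticSol

variable {W g u : ℝ → ℝ}

lemma contDiff_deriv (hu : IsStaticSol W g u) : ContDiff ℝ ∞ (deriv u) :=
  (contDiff_infty_iff_deriv.1 hu.contDiff).2

lemma hasDerivAt (hu : IsStaticSol W g u) (x : ℝ) : HasDerivAt u (deriv u x) x :=
  (hu.contDiff.differentiable (by simp) x).hasDerivAt

lemma hasDerivAt_deriv (hu : IsStaticSol W g u) (x : ℝ) :
    HasDerivAt (deriv u) (W x * u x + g x) x :=
  hu.eq x ▸ (hu.contDiff_deriv.differentiable (by simp) x).hasDerivAt

lemma of_hasDerivAt {u' : ℝ → ℝ} (hc : ContDiff ℝ ∞ u) (hu : ∀ x, HasDerivAt u (u' x) x)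
    (hu' : ∀ x, HasDerivAt u' (W x * u x + g x) x) : IsStaticSol W g u :=
  ⟨hc, fun x => by rw [funext fun y => (hu y).deriv, (hu' x).deriv]⟩

lemma hasDerivAt_mul_deriv (hu : IsStaticSol W g u) (x : ℝ) :
    HasDerivAt (fun y => u y * deriv u y) (staticEnergyDensity W u x + u x * g x) x := by
  refine ((hu.hasDerivAt x).mul (hu.hasDerivAt_deriv x)).congr_deriv ?_
  rw [staticEnergyDensity]
  ring

/-- Integrating `(u u')' = u'² + W u² + u g` bounds the energy by `-∫ u g`. -/
theorem integrable_staticEnergyDensity (hu : IsStaticSol W g u) (hW : ∀ x, 0 ≤ W x)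
    (hug : Integrable fun x => u x * g x) (hbot : ∀ᶠ x in atBot, 0 ≤ u x * deriv u x)
    (htop : ∀ᶠ x in atTop, u x * deriv u x ≤ 0) : Integrable (staticEnergyDensity W u) := by
  have hnonneg (x : ℝ) : 0 ≤ staticEnergyDensity W u x :=
    add_nonneg (sq_nonneg _) (mul_nonneg (hW x) (sq_nonneg _))
  have hcont : Continuous fun x => staticEnergyDensity W u x + u x * g x := by
    have huu' := hu.contDiff.mul hu.contDiff_deriv
    rw [← funext fun x => (hu.hasDerivAt_mul_deriv x).deriv]
    exact (contDiff_infty_iff_deriv.1 huu').2.continuous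
  have hii (a b : ℝ) : IntervalIntegrable (staticEnergyDensity W u) volume a b := by
    simpa using (hcont.intervalIntegrable a b).sub hug.intervalIntegrable
  have henergy (a b : ℝ) : ∫ x in a..b, staticEnergyDensity W u x =
      u b * deriv u b - u a * deriv u a - ∫ x in a..b, u x * g x := by
    rw [← intervalIntegral.integral_eq_sub_of_hasDerivAt (fun x _ => hu.hasDerivAt_mul_deriv x)
      (hcont.intervalIntegrable a b), intervalIntegral.integral_add (hii a b)
        hug.intervalIntegrable, add_sub_cancel_right]
  refine integrable_of_intervalIntegral_norm_bounded (a := fun r : ℝ => -r) (b := id)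
    (∫ x, ‖u x * g x‖) (fun r => (hii (-r) r).1) tendsto_neg_atTop_atBot tendsto_id ?_
  filter_upwards [tendsto_neg_atTop_atBot.eventually hbot, htop, eventually_ge_atTop 0]
    with r hr₁ hr₂ hr₀
  simp only [Real.norm_of_nonneg (hnonneg _), id_eq]
  calc ∫ x in (-r)..r, staticEnergyDensity W u x ≤ -∫ x in (-r)..r, u x * g x := by
        rw [henergy]; linarith
    _ ≤ ‖∫ x in (-r)..r, u x * g x‖ := neg_le_abs _
    _ ≤ ∫ x in Ioc (-r) r, ‖u x * g x‖ := by
        rw [intervalIntegral.integral_of_le (by linarith)]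
        exact norm_integral_le_integral_norm _
    _ ≤ ∫ x, ‖u x * g x‖ := setIntegral_le_integral hug.norm (ae_of_all _ fun _ => norm_nonneg _)

end IsStaticSol

/-- Solutions `y`, `z` of the homogeneous static equation which are linearly independent, with `y`
of finite energy towards `-∞` and `z` of finite energy towards `+∞`. The finiteness is encoded by
the signs of `y y'` and `z z'`, and the independence by the value `w` of the Wronskian. -/
structure IsStaticPair (W y z : ℝ → ℝ) (w : ℝ) : Prop where
  left : IsStaticSol W 0 y
  right : IsStaticSol W 0 z
  left_mul_deriv_nonneg : ∀ x, 0 ≤ y x * deriv y x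
  right_mul_deriv_nonpos : ∀ x, z x * deriv z x ≤ 0
  ne_zero : w ≠ 0
  wronskian_eq : ∀ x, y x * deriv z x - deriv y x * z x = w

namespace IsStaticPair

variable {W g y z A B : ℝ → ℝ} {w : ℝ}

lemma hasDerivAt_variationOfConstants (h : IsStaticPair W y z w)
    (hA : ∀ x, HasDerivAt A (y x * g x) x) (hB : ∀ x, HasDerivAt B (z x * g x) x) (x : ℝ) :
    HasDerivAt (fun x => w⁻¹ * (A x * z x - B x * y x))
      (w⁻¹ * (A x * deriv z x - B x * deriv y x)) x := by
  refine ((((hA x).mul (h.right.hasDerivAt x)).sub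
    ((hB x).mul (h.left.hasDerivAt x))).const_mul w⁻¹).congr_deriv ?_
  ring

lemma isStaticSol_variationOfConstants (h : IsStaticPair W y z w) (hg : ContDiff ℝ ∞ g)
    (hA : ∀ x, HasDerivAt A (y x * g x) x) (hB : ∀ x, HasDerivAt B (z x * g x) x) :
    IsStaticSol W g fun x => w⁻¹ * (A x * z x - B x * y x) := by
  have hAs : ContDiff ℝ ∞ A := contDiff_infty_iff_deriv.2
    ⟨fun x => (hA x).differentiableAt, funext (fun x => (hA x).deriv) ▸ h.left.contDiff.mul hg⟩
  have hBs : ContDiff ℝ ∞ B := contDiff_infty_iff_deriv.2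
    ⟨fun x => (hB x).differentiableAt, funext (fun x => (hB x).deriv) ▸ h.right.contDiff.mul hg⟩
  refine .of_hasDerivAt
    (contDiff_const.mul ((hAs.mul h.right.contDiff).sub (hBs.mul h.left.contDiff)))
    (h.hasDerivAt_variationOfConstants hA hB) fun x => ?_
  refine ((((hA x).mul (h.right.hasDerivAt_deriv x)).sub
    ((hB x).mul (h.left.hasDerivAt_deriv x))).const_mul w⁻¹).congr_deriv ?_
  have hw := h.ne_zero
  simp only [Pi.zero_apply, add_zero]
  field_simp
  linear_combination g x * h.wronskian_eq x

theorem exists_isStaticSol (h : IsStaticPair W y z w) (hW : ∀ x, 0 ≤ W x)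
    (hg : ContDiff ℝ ∞ g) (hsupp : HasCompactSupport g) :
    ∃ u, IsStaticSol W g u ∧ Integrable (staticEnergyDensity W u) := by
  obtain ⟨r, -, hr⟩ := hsupp.exists_pos_le_norm
  let A : ℝ → ℝ := fun x => ∫ s in (-r)..x, y s * g s
  let B : ℝ → ℝ := fun x => ∫ s in r..x, z s * g s
  have hA (x : ℝ) : HasDerivAt A (y x * g x) x :=
    ((h.left.contDiff.mul hg).continuous.integral_hasStrictDerivAt _ x).hasDerivAt
  have hB (x : ℝ) : HasDerivAt B (z x * g x) x :=
    ((h.right.contDiff.mul hg).continuous.integral_hasStrictDerivAt _ x).hasDerivAt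
  have hA₀ {x : ℝ} (hx : x ≤ -r) : A x = 0 := by
    refine (intervalIntegral.integral_congr fun s hs => ?_).trans intervalIntegral.integral_zero
    rw [uIcc_of_ge hx] at hs
    simp only [hr s (le_abs.2 (Or.inr (by linarith [hs.2]))), mul_zero]
  have hB₀ {x : ℝ} (hx : r ≤ x) : B x = 0 := by
    refine (intervalIntegral.integral_congr fun s hs => ?_).trans intervalIntegral.integral_zero
    rw [uIcc_of_le hx] at hs
    simp only [hr s (le_abs.2 (Or.inl hs.1)), mul_zero]
  have hu := h.isStaticSol_variationOfConstants hg hA hB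
  have hu' (x : ℝ) := (h.hasDerivAt_variationOfConstants hA hB x).deriv
  refine ⟨_, hu, hu.integrable_staticEnergyDensity hW ?_ ?_ ?_⟩
  · exact (hu.contDiff.mul hg).continuous.integrable_of_hasCompactSupport hsupp.mul_left
  · filter_upwards [eventually_le_atBot (-r)] with x hx
    rw [hu', hA₀ hx]
    linear_combination (w⁻¹ * B x) ^ 2 * h.left_mul_deriv_nonneg x
  · filter_upwards [eventually_ge_atTop r] with x hx
    rw [hu', hB₀ hx]
    linear_combination (w⁻¹ * A x) ^ 2 * h.right_mul_deriv_nonpos x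

end IsStaticPair

/-! ### Time integrals -/

/-- The time integral of `F` with initial value `u`. -/
noncomputable def timeIntegral (u : ℝ → ℝ) (F : ℝ → ℝ → ℝ) (t x : ℝ) : ℝ :=
  u x + timePrimitive F t x

section TimeIntegral

variable {W u : ℝ → ℝ} {F : ℝ → ℝ → ℝ}

lemma timeDeriv_timeIntegral (hF : Continuous (Function.uncurry F)) :
    timeDeriv (timeIntegral u F) = F := by
  ext t x
  exact ((hasDerivAt_timePrimitive_time hF t x).const_add (u x)).deriv

lemma spaceDeriv_timeIntegral (hu : Differentiable ℝ u) (hF : ContDiff ℝ 1 (Function.uncurry F)) :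
    spaceDeriv (timeIntegral u F) = timeIntegral (deriv u) (spaceDeriv F) := by
  ext t x
  exact ((hu x).hasDerivAt.add (hasDerivAt_timePrimitive_space hF t x)).deriv

lemma timeIntegral_zero : timeIntegral u F 0 = u := by
  ext x
  simp [timeIntegral, timePrimitive]

lemma IsWave.timePrimitive_spaceDeriv_spaceDeriv (hF : IsWave W F) (t x : ℝ) :
    timePrimitive (spaceDeriv (spaceDeriv F)) t x =
      timeDeriv F t x - timeDeriv F 0 x + W x * timePrimitive F t x := by
  have hFt := hF.contDiff_timeDeriv
  have hFtt : ContDiff ℝ ∞ (Function.uncurry (timeDeriv (timeDeriv F))) :=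
    contDiff_timeDeriv hFt le_rfl
  have hslice {G : ℝ → ℝ → ℝ} (hG : ContDiff ℝ ∞ (Function.uncurry G)) :
      IntervalIntegrable (fun τ => G τ x) volume 0 t :=
    (hG.continuous.comp (Continuous.prodMk_left x)).intervalIntegrable 0 t
  calc timePrimitive (spaceDeriv (spaceDeriv F)) t x
      = ∫ τ in (0 : ℝ)..t, (timeDeriv (timeDeriv F) τ x + W x * F τ x) :=
        intervalIntegral.integral_congr fun τ _ => by simp only [hF.eq, sub_add_cancel]
    _ = timePrimitive (timeDeriv (timeDeriv F)) t x + W x * timePrimitive F t x := by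
        rw [intervalIntegral.integral_add (hslice hFtt) ((hslice hF.contDiff).const_mul _),
          intervalIntegral.integral_const_mul, timePrimitive, timePrimitive]
    _ = timeDeriv F t x - timeDeriv F 0 x + W x * timePrimitive F t x := by
        rw [timePrimitive_eq_sub_of_hasDerivAt
          (hasDerivAt_time (hFt.differentiable (by simp)) · x) hFtt.continuous]

protected theorem IsWave.timeIntegral (hF : IsWave W F) (hu : IsStaticSol W (timeDeriv F 0) u) :
    IsWave W (timeIntegral u F) where
  contDiff := (hu.contDiff.comp contDiff_snd).add (contDiff_timePrimitive hF.contDiff)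
  eq t x := by
    rw [timeDeriv_timeIntegral hF.contDiff.continuous,
      spaceDeriv_timeIntegral (hu.contDiff.differentiable (by simp))
        (hF.contDiff.of_le (mod_cast le_top)),
      spaceDeriv_timeIntegral (hu.contDiff_deriv.differentiable (by simp))
        (hF.contDiff_spaceDeriv.of_le (mod_cast le_top)),
      timeIntegral, timeIntegral, hu.eq, hF.timePrimitive_spaceDeriv_spaceDeriv]
    ring

lemma IsWave.energyDensity_timeIntegral_zero (hF : IsWave W F) :
    energyDensity W (timeIntegral u F) 0 =
      fun x => F 0 x ^ 2 + staticEnergyDensity W u x := by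
  ext x
  rw [energyDensity, timeDeriv_timeIntegral hF.contDiff.continuous, spaceDeriv, timeIntegral_zero,
    staticEnergyDensity, add_assoc]

theorem IsStaticPair.exists_isWave_timeDeriv_eq {y z : ℝ → ℝ} {w : ℝ} (hyz : IsStaticPair W y z w)
    (hW : ∀ x, 0 ≤ W x) (hF : IsWave W F) (hsupp : HasSpatiallyCompactSupport F) :
    ∃ Ftil : ℝ → ℝ → ℝ, IsWave W Ftil ∧ timeDeriv Ftil = F ∧
      ∃ E₀ : ℝ, ∀ t, Integrable (energyDensity W Ftil t) ∧ ∫ x, energyDensity W Ftil t x = E₀ := by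
  obtain ⟨u, hu, hE⟩ := hyz.exists_isStaticSol hW
    (hF.contDiff_timeDeriv.comp (contDiff_prodMk_right 0)) (hsupp.timeDeriv.hasCompactSupport 0)
  have hderiv : timeDeriv (timeIntegral u F) = F :=
    timeDeriv_timeIntegral hF.contDiff.continuous
  have hF₀ : Integrable fun x => F 0 x ^ 2 := by
    have hc : Continuous (F 0) := hF.contDiff.continuous.comp (Continuous.prodMk_right 0)
    simp only [sq]
    exact (hc.mul hc).integrable_of_hasCompactSupport (hsupp.hasCompactSupport 0).mul_left
  have hE₀ : Integrable (energyDensity W (timeIntegral u F) 0) :=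
    hF.energyDensity_timeIntegral_zero ▸ hF₀.add hE
  exact ⟨timeIntegral u F, hF.timeIntegral hu, hderiv, _,
    (hF.timeIntegral hu).integrable_energyDensity_and_integral_eq (hderiv.symm ▸ hsupp) hE₀⟩

end TimeIntegral

/-! ### Static modes in the tortoise coordinate -/

lemma hasDerivAt_tortoise {m ρ : ℝ} (hm : m ≠ 0) (hρ : ρ ≠ 0) :
    HasDerivAt (tortoise m) ((ρ + m) ^ 2 / ρ ^ 2) ρ := by
  have hinv : HasDerivAt (fun r : ℝ => m ^ 2 / r) (m ^ 2 * -(ρ ^ 2)⁻¹) ρ :=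
    (hasDerivAt_inv hρ).const_mul (m ^ 2)
  have hlog : HasDerivAt (fun r : ℝ => Real.log (r / m)) (1 / m / (ρ / m)) ρ :=
    ((hasDerivAt_id ρ).div_const m).log (div_ne_zero hρ hm)
  refine (((hasDerivAt_id ρ).sub hinv).add (hlog.const_mul (2 * m))).congr_deriv ?_
  field_simp
  ring

lemma strictMonoOn_tortoise {m : ℝ} (hm : 0 < m) : StrictMonoOn (tortoise m) (Ioi 0) := by
  have hderiv {ρ : ℝ} (hρ : 0 < ρ) := hasDerivAt_tortoise hm.ne' hρ.ne'
  refine strictMonoOn_of_deriv_pos (convex_Ioi 0)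
    (fun ρ hρ => (hderiv hρ).continuousAt.continuousWithinAt) fun ρ hρ => ?_
  rw [interior_Ioi, mem_Ioi] at hρ
  rw [(hderiv hρ).deriv]
  positivity

/-- `σ` expresses the isotropic radius in terms of the tortoise coordinate, on the exterior of the
extreme Reissner–Nordström black hole of mass `m`. -/
structure IsTortoiseInverse (m : ℝ) (σ : ℝ → ℝ) : Prop where
  mass_pos : 0 < m
  pos : ∀ x, 0 < σ x
  tortoise_apply : ∀ x, tortoise m (σ x) = x

/-- The `p`-mode potential `W_p` as a function of the isotropic radius. The index `p` of the mode
may be any real number. -/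
noncomputable def modePotential (m p ρ : ℝ) : ℝ := V1 m ρ + p * (p + 1) * V2 m ρ

/-- The time-independent solution of the `p`-mode wave equation which behaves like `ρ ^ p` at the
horizon, as a function of the isotropic radius. -/
noncomputable def staticMode (m p ρ : ℝ) : ℝ := (ρ + m) * ρ ^ p

/-- The derivative of `staticMode` with respect to the tortoise coordinate (not `ρ`), as a function
of the isotropic radius. -/
noncomputable def staticModeDeriv (m p ρ : ℝ) : ℝ :=
  ((p + 1) * ρ + p * m) * ρ ^ (p + 1) / (ρ + m) ^ 2

section StaticMode

variable {m p ρ : ℝ}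

lemma modePotential_nonneg (hm : 0 ≤ m) (hp : 0 ≤ p) (hρ : 0 ≤ ρ) : 0 ≤ modePotential m p ρ := by
  unfold modePotential V1 V2
  positivity

lemma modePotential_neg_sub_one : modePotential m (-p - 1) = modePotential m p := by
  ext ρ
  unfold modePotential
  ring

lemma staticMode_mul_deriv (hρ : 0 < ρ) :
    staticMode m p ρ * staticModeDeriv m p ρ =
      ((p + 1) * ρ + p * m) * (ρ * (ρ ^ p) ^ 2 / (ρ + m)) := by
  unfold staticMode staticModeDeriv
  rw [Real.rpow_add_one hρ.ne']
  field_simp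

lemma staticMode_mul_deriv_nonneg (hm : 0 ≤ m) (hp : 0 ≤ p) (hρ : 0 < ρ) :
    0 ≤ staticMode m p ρ * staticModeDeriv m p ρ := by
  rw [staticMode_mul_deriv hρ]
  positivity

lemma staticMode_mul_deriv_nonpos (hm : 0 ≤ m) (hp : p ≤ -1) (hρ : 0 < ρ) :
    staticMode m p ρ * staticModeDeriv m p ρ ≤ 0 := by
  rw [staticMode_mul_deriv hρ]
  refine mul_nonpos_of_nonpos_of_nonneg ?_ (by positivity)
  nlinarith

lemma staticMode_wronskian (hm : 0 ≤ m) (hρ : 0 < ρ) :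
    staticMode m p ρ * staticModeDeriv m (-p - 1) ρ
      - staticModeDeriv m p ρ * staticMode m (-p - 1) ρ = -(2 * p + 1) := by
  have hp : ρ ^ (-p - 1) = (ρ ^ p)⁻¹ / ρ := by
    rw [Real.rpow_sub_one hρ.ne', Real.rpow_neg hρ.le]
  have hne : ρ ^ p ≠ 0 := (Real.rpow_pos_of_pos hρ p).ne'
  unfold staticMode staticModeDeriv
  rw [Real.rpow_add_one hρ.ne', Real.rpow_add_one hρ.ne', hp]
  field_simp
  ring

end StaticMode

namespace IsTortoiseInverse

variable {m p : ℝ} {σ : ℝ → ℝ}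

lemma strictMono (hσ : IsTortoiseInverse m σ) : StrictMono σ := fun x y hxy => by
  rwa [← (strictMonoOn_tortoise hσ.mass_pos).lt_iff_lt (hσ.pos x) (hσ.pos y), hσ.tortoise_apply,
    hσ.tortoise_apply]

lemma range_eq (hσ : IsTortoiseInverse m σ) : range σ = Ioi 0 := by
  refine Subset.antisymm (range_subset_iff.2 hσ.pos) fun ρ hρ => ⟨tortoise m ρ, ?_⟩
  exact (strictMonoOn_tortoise hσ.mass_pos).injOn (hσ.pos _) hρ (hσ.tortoise_apply _)

lemma continuous (hσ : IsTortoiseInverse m σ) : Continuous σ := by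
  refine continuous_iff_continuousAt.2 fun x =>
    (hσ.strictMono.strictMonoOn univ).continuousAt_of_image_mem_nhds univ_mem ?_
  rw [image_univ, hσ.range_eq]
  exact Ioi_mem_nhds (hσ.pos x)

lemma hasDerivAt (hσ : IsTortoiseInverse m σ) (x : ℝ) :
    HasDerivAt σ (σ x ^ 2 / (σ x + m) ^ 2) x := by
  have hm := hσ.mass_pos
  have hx := hσ.pos x
  rw [← inv_div]
  exact HasDerivAt.of_local_left_inverse hσ.continuous.continuousAt
    (hasDerivAt_tortoise hm.ne' hx.ne') (by positivity) (Eventually.of_forall hσ.tortoise_apply)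

lemma contDiff (hσ : IsTortoiseInverse m σ) : ContDiff ℝ ∞ σ := by
  have hfield : ContDiffOn ℝ ∞ (fun ρ : ℝ => ρ ^ 2 / (ρ + m) ^ 2) (Ioi 0) :=
    (contDiffOn_id.pow 2).div ((contDiffOn_id.add contDiffOn_const).pow 2)
      fun ρ hρ => (pow_pos (add_pos hρ hσ.mass_pos) 2).ne'
  refine contDiff_iff_contDiffAt.2 fun x => ?_
  exact (ODE.contDiffOn_enat_Icc_of_hasDerivWithinAt (f := fun _ ρ => ρ ^ 2 / (ρ + m) ^ 2)
    (hfield.comp contDiffOn_snd fun _ h => h.2) (fun y _ => (hσ.hasDerivAt y).hasDerivWithinAt)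
    fun y _ => hσ.pos y).contDiffAt (Icc_mem_nhds (sub_one_lt x) (lt_add_one x))

lemma hasDerivAt_staticMode (hσ : IsTortoiseInverse m σ) (p x : ℝ) :
    HasDerivAt (staticMode m p ∘ σ) (staticModeDeriv m p (σ x)) x := by
  have hm := hσ.mass_pos
  have hx := hσ.pos x
  refine (((hσ.hasDerivAt x).add_const m).mul
    ((hσ.hasDerivAt x).rpow_const (p := p) (Or.inl hx.ne'))).congr_deriv ?_
  rw [staticModeDeriv, Real.rpow_add_one hx.ne', Real.rpow_sub_one hx.ne']
  field_simp
  ring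

lemma hasDerivAt_staticModeDeriv (hσ : IsTortoiseInverse m σ) (p x : ℝ) :
    HasDerivAt (staticModeDeriv m p ∘ σ)
      (modePotential m p (σ x) * staticMode m p (σ x)) x := by
  have hm := hσ.mass_pos
  have hx := hσ.pos x
  refine (((((hσ.hasDerivAt x).const_mul (p + 1)).add_const (p * m)).mul
    ((hσ.hasDerivAt x).rpow_const (p := p + 1) (Or.inl hx.ne'))).div
      (((hσ.hasDerivAt x).add_const m).fun_pow 2) (by positivity)).congr_deriv ?_
  simp only [staticMode, modePotential, V1, V2, Pi.mul_apply, add_sub_cancel_right,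
    Real.rpow_add_one hx.ne']
  field_simp
  push_cast
  ring

lemma isStaticSol (hσ : IsTortoiseInverse m σ) (p : ℝ) :
    IsStaticSol (modePotential m p ∘ σ) 0 (staticMode m p ∘ σ) :=
  .of_hasDerivAt ((hσ.contDiff.add contDiff_const).mul
      (hσ.contDiff.rpow_const_of_ne fun x => (hσ.pos x).ne'))
    (hσ.hasDerivAt_staticMode p) fun x => by
      simpa [Function.comp_def] using hσ.hasDerivAt_staticModeDeriv p x

theorem isStaticPair (hσ : IsTortoiseInverse m σ) (hp : 0 ≤ p) :
    IsStaticPair (modePotential m p ∘ σ) (staticMode m p ∘ σ)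
      (staticMode m (-p - 1) ∘ σ) (-(2 * p + 1)) where
  left := hσ.isStaticSol p
  right := by simpa only [modePotential_neg_sub_one] using hσ.isStaticSol (-p - 1)
  left_mul_deriv_nonneg x := by
    rw [(hσ.hasDerivAt_staticMode p x).deriv]
    exact staticMode_mul_deriv_nonneg hσ.mass_pos.le hp (hσ.pos x)
  right_mul_deriv_nonpos x := by
    rw [(hσ.hasDerivAt_staticMode (-p - 1) x).deriv]
    exact staticMode_mul_deriv_nonpos hσ.mass_pos.le (by linarith) (hσ.pos x)
  ne_zero := by linarith
  wronskian_eq x := by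
    rw [(hσ.hasDerivAt_staticMode p x).deriv, (hσ.hasDerivAt_staticMode (-p - 1) x).deriv]
    exact staticMode_wronskian hσ.mass_pos.le (hσ.pos x)

end IsTortoiseInverse

theorem mode_time_integral_exists_general {m p : ℝ} (hp : 0 ≤ p) {σ : ℝ → ℝ}
    (hσ : IsTortoiseInverse m σ) {F : ℝ → ℝ → ℝ} (hF : IsWave (modePotential m p ∘ σ) F)
    (hsupp : HasSpatiallyCompactSupport F) :
    ∃ Ftil : ℝ → ℝ → ℝ, IsWave (modePotential m p ∘ σ) Ftil ∧ timeDeriv Ftil = F ∧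
      ∃ E₀ : ℝ, ∀ t, Integrable (energyDensity (modePotential m p ∘ σ) Ftil t) ∧
        ∫ x, energyDensity (modePotential m p ∘ σ) Ftil t x = E₀ :=
  (hσ.isStaticPair hp).exists_isWave_timeDeriv_eq
    (fun x => modePotential_nonneg hσ.mass_pos.le hp (hσ.pos x).le) hF hsupp

/-- Existence of a time integral with finite conserved energy (mode version of
Lemma 3 of the paper): if `F` is a smooth solution of the `ℓ`-mode wave equation
`∂²F/∂t² = ∂²F/∂x² - W_ℓ(x)·F` vanishing for `|x| ≥ R + |t|`, then there is a smooth
`F̃` with `∂F̃/∂t = F`, satisfying the same equation, whose energy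
`∫_ℝ [(∂F̃/∂t)² + (∂F̃/∂x)² + W_ℓ·F̃²] dx` is finite and independent of `t`. -/
theorem mode_time_integral_exists (m : ℝ) (hm : 0 < m) (ℓ : ℕ)
    (σ : ℝ → ℝ) (hσpos : ∀ x : ℝ, 0 < σ x) (hσ : ∀ x : ℝ, tortoise m (σ x) = x)
    (W : ℝ → ℝ) (hW : ∀ x : ℝ, W x = V1 m (σ x) + (ℓ : ℝ) * ((ℓ : ℝ) + 1) * V2 m (σ x))
    (F : ℝ → ℝ → ℝ) (hF : ContDiff ℝ (⊤ : ℕ∞) (Function.uncurry F))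
    (heq : ∀ t x : ℝ, deriv (deriv (fun τ => F τ x)) t = deriv (deriv (F t)) x - W x * F t x)
    (R : ℝ) (hR : 0 < R) (hsupp : ∀ t x : ℝ, R + |t| ≤ |x| → F t x = 0) :
    ∃ Ftil : ℝ → ℝ → ℝ,
      ContDiff ℝ (⊤ : ℕ∞) (Function.uncurry Ftil) ∧
      (∀ t x : ℝ, deriv (fun τ => Ftil τ x) t = F t x) ∧
      (∀ t x : ℝ, deriv (deriv (fun τ => Ftil τ x)) t
        = deriv (deriv (Ftil t)) x - W x * Ftil t x) ∧
      ∃ E₀ : ℝ, ∀ t : ℝ,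
        Integrable (fun x : ℝ =>
          (deriv (fun τ => Ftil τ x) t) ^ 2 + (deriv (Ftil t) x) ^ 2 + W x * Ftil t x ^ 2) ∧
        (∫ x : ℝ,
          ((deriv (fun τ => Ftil τ x) t) ^ 2 + (deriv (Ftil t) x) ^ 2
            + W x * Ftil t x ^ 2)) = E₀ := by
  obtain rfl : W = modePotential m ℓ ∘ σ := funext hW
  obtain ⟨Ftil, hFtil, hderiv, hE⟩ := mode_time_integral_exists_general ℓ.cast_nonneg
    ⟨hm, hσpos, hσ⟩ ⟨hF, heq⟩ (.of_lightCone hsupp)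
  exact ⟨Ftil, hFtil.contDiff, congrFun₂ hderiv, hFtil.eq, hE⟩
end

section
/- The Aretakis quantity H₀ is conserved along the horizon generators: for every v₁, v₂ ∈ ℝ, ∂_rΦ(v₁, m) + Φ(v₁, m)/m = ∂_rΦ(v₂, m) + Φ(v₂, m)/m. Equivalently, the function v ↦ ∂_rΦ(v,m) + Φ(v,m)/m has vanishing derivative in v. -/
/-!
On a degenerate horizon the metric function `F` has a double zero, so the wave equation loses
every term without a `v`-derivative. What survives is the transport equation
`∂_v (∂_rΦ + Φ / r₀) = 0` along the horizon generators. The horizon of extreme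
Reissner–Nordström is of this kind, with `F r = ((r - m) / r) ^ 2` and `r₀ = m`.
-/

open Function

section PartialDerivative

variable {𝕜 X E : Type*} [NontriviallyNormedField 𝕜] [NormedAddCommGroup X] [NormedSpace 𝕜 X]
  [NormedAddCommGroup E] [NormedSpace 𝕜 E] {f : X → 𝕜 → E} {x : X} {y : 𝕜} {n k : WithTop ℕ∞}

lemma contDiffAt_fst_of_uncurry (hf : ContDiffAt 𝕜 n (uncurry f) (x, y)) :
    ContDiffAt 𝕜 n (fun z => f z y) x :=
  hf.comp x (contDiffAt_id.prodMk contDiffAt_const)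

lemma contDiffAt_deriv_snd_of_uncurry (hf : ContDiffAt 𝕜 n (uncurry f) (x, y))
    (hkn : k + 1 ≤ n) : ContDiffAt 𝕜 k (fun z => deriv (f z) y) x :=
  (hf.fderiv contDiffAt_const hkn).clm_apply contDiffAt_const

end PartialDerivative

section DegenerateHorizon

variable {E : Type*} [NormedAddCommGroup E] [NormedSpace ℝ E]
  {F : ℝ → ℝ} {Φ : ℝ → ℝ → E} {v r r₀ : ℝ}

/-- `r² □Φ` for a spherically symmetric field `Φ(v, r)` on the metric
`-F(r) dv² + 2 dv dr + r² dΩ²`. The factor `r²` keeps the coefficients free of division by `r`. -/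
noncomputable def sphericalWaveOperator (F : ℝ → ℝ) (Φ : ℝ → ℝ → E) (v r : ℝ) : E :=
  (r ^ 2 * F r) • deriv (deriv (Φ v)) r
    + (r ^ 2 * deriv F r + 2 * r * F r) • deriv (Φ v) r
    + (2 * r ^ 2) • deriv (fun w => deriv (Φ w) r) v
    + (2 * r) • deriv (fun w => Φ w r) v

/-- The Aretakis quantity `H₀(v) = ∂_rΦ(v, r) + Φ(v, r) / r` on the sphere of radius `r`;
it is of interest where `r` is the radius of a degenerate horizon. -/
noncomputable def aretakisQuantity (Φ : ℝ → ℝ → E) (r v : ℝ) : E :=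
  deriv (Φ v) r + r⁻¹ • Φ v r

lemma aretakisQuantity_real (Φ : ℝ → ℝ → ℝ) (r : ℝ) :
    aretakisQuantity Φ r = fun v => deriv (Φ v) r + Φ v r / r := by
  funext v
  rw [aretakisQuantity, smul_eq_mul, inv_mul_eq_div]

lemma hasDerivAt_aretakisQuantity (hΦ : ContDiffAt ℝ 2 (uncurry Φ) (v, r)) :
    HasDerivAt (aretakisQuantity Φ r)
      (deriv (fun w => deriv (Φ w) r) v + r⁻¹ • deriv (fun w => Φ w r) v) v := by
  have hradial : ContDiffAt ℝ 1 (fun w => deriv (Φ w) r) v :=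
    contDiffAt_deriv_snd_of_uncurry hΦ one_add_one_eq_two.le
  have hvalue : ContDiffAt ℝ 2 (fun w => Φ w r) v := contDiffAt_fst_of_uncurry hΦ
  exact (hradial.differentiableAt one_ne_zero).hasDerivAt.add
    ((hvalue.differentiableAt two_ne_zero).hasDerivAt.const_smul r⁻¹)

lemma sphericalWaveOperator_eq_smul_deriv_aretakisQuantity (hF : F r₀ = 0)
    (hF' : HasDerivAt F 0 r₀) (hΦ : ContDiffAt ℝ 2 (uncurry Φ) (v, r₀)) :
    sphericalWaveOperator F Φ v r₀ = (2 * r₀ ^ 2) • deriv (aretakisQuantity Φ r₀) v := by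
  have hcoeff : 2 * r₀ ^ 2 * r₀⁻¹ = 2 * r₀ := by rw [mul_assoc, sq, mul_self_mul_inv]
  simp only [sphericalWaveOperator, (hasDerivAt_aretakisQuantity hΦ).deriv, hF, hF'.deriv,
    mul_zero, add_zero, zero_smul, zero_add, smul_add, smul_smul, hcoeff]

theorem aretakis_quantity_conserved_general (hr₀ : r₀ ≠ 0) (hF : F r₀ = 0)
    (hF' : HasDerivAt F 0 r₀) (hΦ : ∀ v, ContDiffAt ℝ 2 (uncurry Φ) (v, r₀))
    (hwave : ∀ v, sphericalWaveOperator F Φ v r₀ = 0) :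
    (∀ v₁ v₂, aretakisQuantity Φ r₀ v₁ = aretakisQuantity Φ r₀ v₂) ∧
    (∀ v, deriv (aretakisQuantity Φ r₀) v = 0) := by
  have hderiv (v : ℝ) : deriv (aretakisQuantity Φ r₀) v = 0 := by
    have htransport : (2 * r₀ ^ 2) • deriv (aretakisQuantity Φ r₀) v = 0 := by
      rw [← sphericalWaveOperator_eq_smul_deriv_aretakisQuantity hF hF' (hΦ v), hwave v]
    exact (smul_eq_zero_iff_right (by positivity)).mp htransport
  have hdiff : Differentiable ℝ (aretakisQuantity Φ r₀) := fun v =>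
    (hasDerivAt_aretakisQuantity (hΦ v)).differentiableAt
  exact ⟨is_const_of_deriv_eq_zero hdiff hderiv, hderiv⟩

end DegenerateHorizon

section ExtremeReissnerNordstrom

variable {m r : ℝ}

/-- The metric function `F(r) = (1 - m / r)²` of the extreme Reissner–Nordström black hole of
mass `m`, written over a common denominator. -/
noncomputable def extremeRNMetricFunction (m r : ℝ) : ℝ := ((r - m) / r) ^ 2

lemma extremeRNMetricFunction_self (m : ℝ) : extremeRNMetricFunction m m = 0 := by
  simp [extremeRNMetricFunction]

lemma hasDerivAt_extremeRNMetricFunction (m : ℝ) (hr : r ≠ 0) :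
    HasDerivAt (extremeRNMetricFunction m) (2 * m * (r - m) / r ^ 3) r := by
  have hquot : HasDerivAt (fun s => (s - m) / s) (m / r ^ 2) r :=
    (((hasDerivAt_id' r).sub_const m).fun_div (hasDerivAt_id' r) hr).congr_deriv (by ring)
  exact (hquot.fun_pow 2).congr_deriv (by norm_num; field_simp)

lemma hasDerivAt_extremeRNMetricFunction_self (hm : m ≠ 0) :
    HasDerivAt (extremeRNMetricFunction m) 0 m := by
  simpa using hasDerivAt_extremeRNMetricFunction m hm

lemma sphericalWaveOperator_extremeRNMetricFunction (m : ℝ) (Φ : ℝ → ℝ → ℝ) (v : ℝ)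
    (hr : r ≠ 0) :
    sphericalWaveOperator (extremeRNMetricFunction m) Φ v r =
      r ^ 2 * (((r - m) / r) ^ 2 * deriv (deriv (Φ v)) r
        + 2 * ((r - m) / r ^ 2) * deriv (Φ v) r
        + 2 * deriv (fun w => deriv (Φ w) r) v
        + (2 / r) * deriv (fun w => Φ w r) v) := by
  simp only [sphericalWaveOperator, (hasDerivAt_extremeRNMetricFunction m hr).deriv,
    extremeRNMetricFunction, smul_eq_mul]
  field_simp
  ring

end ExtremeReissnerNordstrom

/-- Conservation of the Aretakis quantity `H₀(v) = ∂_rΦ(v,m) + Φ(v,m)/m` along the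
horizon generators of the extreme Reissner–Nordström black hole: for a smooth
spherically symmetric solution of the wave equation in ingoing Eddington–Finkelstein
coordinates, `H₀(v₁) = H₀(v₂)` for all `v₁, v₂`, and `v ↦ H₀(v)` has vanishing
derivative. -/
theorem aretakis_quantity_conserved (m : ℝ) (hm : 0 < m)
    (Φ : ℝ → ℝ → ℝ) (hΦ : ContDiff ℝ (⊤ : ℕ∞) (Function.uncurry Φ))
    (hwave : ∀ v r : ℝ, 0 < r →
      ((r - m) / r) ^ 2 * deriv (deriv (Φ v)) r
        + 2 * ((r - m) / r ^ 2) * deriv (Φ v) r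
        + 2 * deriv (fun w => deriv (Φ w) r) v
        + (2 / r) * deriv (fun w => Φ w r) v = 0) :
    (∀ v₁ v₂ : ℝ,
      deriv (Φ v₁) m + Φ v₁ m / m = deriv (Φ v₂) m + Φ v₂ m / m) ∧
    (∀ v : ℝ, deriv (fun w => deriv (Φ w) m + Φ w m / m) v = 0) := by
  have hhorizon (v : ℝ) : sphericalWaveOperator (extremeRNMetricFunction m) Φ v m = 0 := by
    rw [sphericalWaveOperator_extremeRNMetricFunction m Φ v hm.ne', hwave v m hm, mul_zero]
  simpa only [aretakisQuantity_real] using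
    aretakis_quantity_conserved_general hm.ne' (extremeRNMetricFunction_self m)
      (hasDerivAt_extremeRNMetricFunction_self hm.ne')
      (fun _ => (contDiff_infty.mp hΦ 2).contDiffAt) hhorizon
end
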